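/- arXiv:1802.02328 — 6 statements merged into one kernel-verified Lean document; each statement's English description precedes it below -/
import Mathlib

section
/- Strong-constraint a posteriori error bound (Proposition 1). Suppose (y^k)_{k=0..K} ⊂ Y, (p^k)_{k=1..K+1} ⊂ Y and u ∈ U satisfy the full-order optimality system: y^0 = u; m(y^k − y^{k−1}, φ) + τ a(y^k, φ) = τ f(φ) for all φ ∈ Y and k = 1,…,K; p^{K+1} = 0; m(φ, p^k − p^{k+1}) + τ a(φ, p^k) = τ (z_d^k − C y^k, C φ)_D for all φ ∈ Y and k = 1,…,K; and (u − u_d, ψ)_U − m(ψ, p^1) = 0 for all ψ ∈ U. Let (y_N^k)_{k=0..K} ⊂ Y, (p_N^k)_{k=1..K+1} ⊂ Y and u_N ∈ U be any candidate (e.g.\ the reduced-basis optimal solution) with y_N^0 = u_N and p_N^{K+1} = 0, and define the residuals r_y^k(φ) = f(φ) − a(y_N^k, φ) − (1/τ) m(y_N^k − y_N^{k−1}, φ), r_p^k(φ) = (z_d^k − C y_N^k, C φ)_D − a(φ, p_N^k) − (1/τ) m(φ, p_N^k − p_N^{k+1}) for φ ∈ Y, r_u(ψ) = m(ψ, p_N^1)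 − (u_N − u_d, ψ)_U for ψ ∈ U, and set R_y = (τ Σ_{k=1}^K ‖r_y^k‖_{Y'}²)^{1/2}, R_p = (τ Σ_{k=1}^K ‖r_p^k‖_{Y'}²)^{1/2}. Then ‖u − u_N‖_U ≤ c₁ + √(c₁² + c₂), where c₁ = (1/2)(‖r_u‖_{U'} + α_LB^{−1/2} R_p) and c₂ = ((√2 + 1)/α_LB) R_y R_p + (γ_c²/(2 α_LB²)) R_y². -/
set_option autoImplicit false

open Finset RealInnerProductSpace

/-- Dual norm of a functional `r` over the nonzero elements of `S`,
with respect to the norm function `nrm`. -/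
noncomputable def dualNorm {Y : Type*} [Zero Y] (nrm : Y → ℝ) (S : Set Y) (r : Y → ℝ) : ℝ :=
  sSup {x : ℝ | ∃ v ∈ S, v ≠ 0 ∧ x = r v / nrm v}

lemma aux_le_dualNorm {Y : Type*} [NormedAddCommGroup Y] [InnerProductSpace ℝ Y]
    [FiniteDimensional ℝ Y] (nrm : Y → ℝ) (S : Set Y) (r : Y →ₗ[ℝ] ℝ) (c : ℝ) (hc : 0 ≤ c)
    (hn : ∀ v, v ≠ 0 → 0 < nrm v) (hb : ∀ v, ‖v‖ ≤ c * nrm v) (h0 : 0 ≤ nrm 0)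
    (v : Y) (hv : v ∈ S) (hv0 : v = 0 → nrm v = 0) :
    r v ≤ dualNorm nrm S ⇑r * nrm v := by
  by_cases h : v = 0
  · rw [hv0 h, h]; simp
  · rw [← div_le_iff₀ (hn v h)]
    refine le_csSup ⟨‖LinearMap.toContinuousLinearMap r‖ * c, ?_⟩ ⟨v, hv, h, rfl⟩
    rintro x ⟨w, -, hw, rfl⟩
    rw [div_le_iff₀ (hn w hw)]
    have h1 := (LinearMap.toContinuousLinearMap r).le_opNorm w
    have h2 : r w ≤ ‖(LinearMap.toContinuousLinearMap r) w‖ := le_abs_self _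
    have h3 := mul_le_mul_of_nonneg_left (hb w) (norm_nonneg (LinearMap.toContinuousLinearMap r))
    linarith

lemma aux_cs (τ : ℝ) (hτ : 0 < τ) (s : Finset ℕ) (d n : ℕ → ℝ) :
    τ * ∑ k ∈ s, d k * n k ≤
      Real.sqrt (τ * ∑ k ∈ s, d k ^ 2) * Real.sqrt (τ * ∑ k ∈ s, n k ^ 2) := by
  have h := Real.sum_mul_le_sqrt_mul_sqrt s d n
  rw [Real.sqrt_mul hτ.le, Real.sqrt_mul hτ.le]
  calc τ * ∑ k ∈ s, d k * n k
      ≤ τ * (Real.sqrt (∑ k ∈ s, d k ^ 2) * Real.sqrt (∑ k ∈ s, n k ^ 2)) := by gcongr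
    _ = (Real.sqrt τ * Real.sqrt τ) *
        (Real.sqrt (∑ k ∈ s, d k ^ 2) * Real.sqrt (∑ k ∈ s, n k ^ 2)) := by
        rw [Real.mul_self_sqrt hτ.le]
    _ = _ := by ring

lemma aux_tel (g : ℕ → ℝ) (K : ℕ) : ∑ k ∈ Icc 1 K, (g (k + 1) - g k) = g (K + 1) - g 1 := by
  induction K with
  | zero => simp
  | succ n ih => rw [Finset.sum_Icc_succ_top (by omega), ih]; ring

lemma aux_final (w s E Q S Ry Rp ru γ c1 c2 : ℝ) (hs : 0 < s) (hw : 0 ≤ w)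
    (hE0 : 0 ≤ E) (hQ0 : 0 ≤ Q) (hS0 : 0 ≤ S) (hRy : 0 ≤ Ry) (hRp : 0 ≤ Rp) (hγ : 0 ≤ γ)
    (hE : s ^ 2 * E ^ 2 ≤ w ^ 2 / 2 + Ry * E)
    (hQ : s ^ 2 * Q ^ 2 ≤ Rp * Q + S * (γ * Q))
    (hm : w ^ 2 + S ^ 2 ≤ ru * w + Rp * E + Ry * Q)
    (hc1 : c1 = (1 / 2) * (ru + (1 / s) * Rp))
    (hc2 : c2 = ((Real.sqrt 2 + 1) / s ^ 2) * Ry * Rp + γ ^ 2 / (2 * (s ^ 2) ^ 2) * Ry ^ 2) :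
    w ≤ c1 + Real.sqrt (c1 ^ 2 + c2) := by
  have hE1 : E ≤ w / s + Ry / s ^ 2 := by
    have hx : s * E ≤ w + Ry / s := by
      refine abs_le_of_sq_le_sq' ?_ (by positivity) |>.2
      have e1 : Ry * E = (Ry / s) * (s * E) := by field_simp
      have e2 : 0 ≤ Ry / s := by positivity
      nlinarith [sq_nonneg (Ry / s - s * E), mul_nonneg hw e2]
    have : E = (s * E) / s := by field_simp
    rw [this]
    calc s * E / s ≤ (w + Ry / s) / s := by gcongr
      _ = _ := by field_simp
  have hQ1 : Q ≤ (Rp + γ * S) / s ^ 2 := by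
    rw [le_div_iff₀ (by positivity)]
    rcases hQ0.eq_or_lt with h | h
    · rw [← h]; simp; positivity
    · refine le_of_mul_le_mul_right ?_ h
      nlinarith
  have h2 : (1 : ℝ) ≤ Real.sqrt 2 := by
    rw [Real.one_le_sqrt]; norm_num
  have key : w ^ 2 ≤ 2 * c1 * w + c2 := by
    have a1 := mul_le_mul_of_nonneg_left hE1 hRp
    have a2 := mul_le_mul_of_nonneg_left hQ1 hRy
    have a3 : 0 ≤ (Real.sqrt 2 - 1) * (Ry * Rp / s ^ 2) :=
      mul_nonneg (by linarith) (by positivity)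
    have a4 : 0 ≤ (S - γ * Ry / s ^ 2 / 2) ^ 2 := sq_nonneg _
    have a5 : 0 ≤ (γ * Ry / s ^ 2) ^ 2 := sq_nonneg _
    have b1 : Rp * (w / s + Ry / s ^ 2) = (1 / s) * Rp * w + Ry * Rp / s ^ 2 := by ring
    have b2 : Ry * ((Rp + γ * S) / s ^ 2) = Ry * Rp / s ^ 2 + (γ * Ry / s ^ 2) * S := by ring
    have b3 : c2 = (Real.sqrt 2 + 1) * (Ry * Rp / s ^ 2) + (γ * Ry / s ^ 2) ^ 2 / 2 := by
      rw [hc2]; field_simp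
    rw [b1] at a1
    rw [b2] at a2
    rw [b3, hc1]
    nlinarith
  have := Real.abs_le_sqrt (show (w - c1) ^ 2 ≤ c1 ^ 2 + c2 by nlinarith)
  linarith [le_abs_self (w - c1)]

/-- Strong-constraint a posteriori error bound (Proposition 1). -/
theorem strong_constraint_a_posteriori_error_bound
    {H Y D : Type*} [NormedAddCommGroup H] [InnerProductSpace ℝ H]
    [NormedAddCommGroup Y] [InnerProductSpace ℝ Y] [FiniteDimensional ℝ Y]
    [NormedAddCommGroup D] [InnerProductSpace ℝ D]
    (ι : Y →ₗ[ℝ] H) (hι : Function.Injective ι)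
    (U : Submodule ℝ Y)
    (a : Y →ₗ[ℝ] (Y →ₗ[ℝ] ℝ))
    (τ : ℝ) (hτ : 0 < τ) (K : ℕ) (hK : 1 ≤ K)
    (αLB : ℝ) (hαLB : 0 < αLB) (hcoer : ∀ v : Y, αLB * ‖v‖ ^ 2 ≤ a v v)
    (C : Y →ₗ[ℝ] D) (γc : ℝ) (hγc : ∀ v : Y, ‖C v‖ ≤ γc * ‖v‖)
    (f : Y →ₗ[ℝ] ℝ) (zd : ℕ → D) (ud : Y) (hud : ud ∈ U)
    (y p yN pN : ℕ → Y) (u uN : Y) (hu : u ∈ U) (huN : uN ∈ U)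
    (hy0 : y 0 = u)
    (hstate : ∀ k, 1 ≤ k → k ≤ K → ∀ φ : Y,
      ⟪ι (y k - y (k - 1)), ι φ⟫ + τ * a (y k) φ = τ * f φ)
    (hpfin : p (K + 1) = 0)
    (hadj : ∀ k, 1 ≤ k → k ≤ K → ∀ φ : Y,
      ⟪ι φ, ι (p k - p (k + 1))⟫ + τ * a φ (p k) = τ * ⟪zd k - C (y k), C φ⟫)
    (hopt : ∀ ψ ∈ U, ⟪ι (u - ud), ι ψ⟫ - ⟪ι ψ, ι (p 1)⟫ = 0)
    (hyN0 : yN 0 = uN) (hpNfin : pN (K + 1) = 0)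
    (ry rp : ℕ → (Y →ₗ[ℝ] ℝ)) (ru : Y →ₗ[ℝ] ℝ)
    (hry : ∀ k, 1 ≤ k → k ≤ K → ∀ φ : Y,
      ry k φ = f φ - a (yN k) φ - (1 / τ) * ⟪ι (yN k - yN (k - 1)), ι φ⟫)
    (hrp : ∀ k, 1 ≤ k → k ≤ K → ∀ φ : Y,
      rp k φ = ⟪zd k - C (yN k), C φ⟫ - a φ (pN k)
        - (1 / τ) * ⟪ι φ, ι (pN k - pN (k + 1))⟫)
    (hru : ∀ ψ ∈ U, ru ψ = ⟪ι ψ, ι (pN 1)⟫ - ⟪ι (uN - ud), ι ψ⟫)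
    (Ry Rp c1 c2 : ℝ)
    (hRy : Ry = Real.sqrt (τ * ∑ k ∈ Icc 1 K, (dualNorm (fun v : Y => ‖v‖) Set.univ ⇑(ry k)) ^ 2))
    (hRp : Rp = Real.sqrt (τ * ∑ k ∈ Icc 1 K, (dualNorm (fun v : Y => ‖v‖) Set.univ ⇑(rp k)) ^ 2))
    (hc1 : c1 = (1 / 2) * (dualNorm (fun v : Y => ‖ι v‖) (U : Set Y) ⇑ru + (1 / Real.sqrt αLB) * Rp))
    (hc2 : c2 = ((Real.sqrt 2 + 1) / αLB) * Ry * Rp + γc ^ 2 / (2 * αLB ^ 2) * Ry ^ 2) :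
    ‖ι (u - uN)‖ ≤ c1 + Real.sqrt (c1 ^ 2 + c2) := by
  obtain ⟨κ, hκ, hanti⟩ := ι.exists_antilipschitzWith (LinearMap.ker_eq_bot.2 hι)
  have hbι : ∀ v : Y, ‖v‖ ≤ κ * ‖ι v‖ := fun v => by
    simpa using hanti.le_mul_norm_sub v 0
  have hY : ∀ (r : Y →ₗ[ℝ] ℝ) (v : Y),
      r v ≤ dualNorm (fun v : Y => ‖v‖) Set.univ ⇑r * ‖v‖ := fun r v =>
    aux_le_dualNorm (fun v : Y => ‖v‖) Set.univ r 1 zero_le_one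
      (fun v hv => norm_pos_iff.2 hv) (fun v => by simp) (by simp) v (Set.mem_univ _)
      (fun h => by simp [h])
  have hU : ∀ v ∈ U, ru v ≤ dualNorm (fun v : Y => ‖ι v‖) (U : Set Y) ⇑ru * ‖ι v‖ := fun v hv =>
    aux_le_dualNorm (fun v : Y => ‖ι v‖) (U : Set Y) ru κ κ.2
      (fun v hv => norm_pos_iff.2 (fun h => hv (hι (by simpa using h)))) hbι (by simp) v hv
      (fun h => by simp [h])
  set e : ℕ → Y := fun k => y k - yN k with he
  set q : ℕ → Y := fun k => p k - pN k with hq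
  have hes : ∀ k ∈ Icc 1 K, ∀ φ : Y,
      ⟪ι (e k), ι φ⟫ - ⟪ι (e (k - 1)), ι φ⟫ + τ * a (e k) φ = τ * ry k φ := by
    intro k hk φ
    obtain ⟨h1, h2⟩ := Finset.mem_Icc.1 hk
    have := hstate k h1 h2 φ
    rw [hry k h1 h2 φ]
    simp only [he, map_sub, inner_sub_left, LinearMap.sub_apply] at this ⊢
    field_simp
    linarith
  have hqs : ∀ k ∈ Icc 1 K, ∀ φ : Y,
      ⟪ι φ, ι (q k)⟫ - ⟪ι φ, ι (q (k + 1))⟫ + τ * a φ (q k)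
        = τ * rp k φ - τ * ⟪C (e k), C φ⟫ := by
    intro k hk φ
    obtain ⟨h1, h2⟩ := Finset.mem_Icc.1 hk
    have := hadj k h1 h2 φ
    rw [hrp k h1 h2 φ]
    simp only [he, hq, map_sub, inner_sub_left, inner_sub_right] at this ⊢
    field_simp
    linarith
  have hq0 : q (K + 1) = 0 := by simp [hq, hpfin, hpNfin]
  have he0 : e 0 = u - uN := by simp [he, hy0, hyN0]
  have hw : ‖ι (e 0)‖ ^ 2 = ru (e 0) + ⟪ι (e 0), ι (q 1)⟫ := by
    have hm : u - uN ∈ U := U.sub_mem hu huN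
    have h1 := hopt _ hm
    rw [he0, hru _ hm, ← real_inner_self_eq_norm_sq]
    simp only [hq, map_sub, inner_sub_left, inner_sub_right] at h1 ⊢
    linarith
  have hdual : ⟪ι (e 0), ι (q 1)⟫ = τ * ∑ k ∈ Icc 1 K, rp k (e k)
      + τ * ∑ k ∈ Icc 1 K, ry k (-q k) - τ * ∑ k ∈ Icc 1 K, ‖C (e k)‖ ^ 2 := by
    have ht := aux_tel (fun k => ⟪ι (e (k - 1)), ι (q k)⟫) K
    simp only [hq0, map_zero, inner_zero_right, Nat.sub_self, Nat.add_sub_cancel] at ht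
    have : ⟪ι (e 0), ι (q 1)⟫
        = - ∑ k ∈ Icc 1 K, (⟪ι (e k), ι (q (k + 1))⟫ - ⟪ι (e (k - 1)), ι (q k)⟫) := by
      rw [ht]; ring
    rw [this, Finset.mul_sum, Finset.mul_sum, Finset.mul_sum, ← Finset.sum_add_distrib,
      ← Finset.sum_sub_distrib, ← Finset.sum_neg_distrib]
    refine Finset.sum_congr rfl fun k hk => ?_
    have h1 := hes k hk (q k)
    have h2 := hqs k hk (e k)
    rw [real_inner_self_eq_norm_sq] at h2
    rw [map_neg]
    linarith
  have hEn : αLB * (τ * ∑ k ∈ Icc 1 K, ‖e k‖ ^ 2)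
      ≤ ‖ι (e 0)‖ ^ 2 / 2 + τ * ∑ k ∈ Icc 1 K, ry k (e k) := by
    have ht := aux_tel (fun k => ‖ι (e (k - 1))‖ ^ 2) K
    simp only [Nat.sub_self, Nat.add_sub_cancel] at ht
    have h1 : ∑ k ∈ Icc 1 K, (αLB * (τ * ‖e k‖ ^ 2)) ≤ ∑ k ∈ Icc 1 K,
        (τ * ry k (e k) - (1 / 2) * (‖ι (e k)‖ ^ 2 - ‖ι (e (k - 1))‖ ^ 2)) := by
      refine Finset.sum_le_sum fun k hk => ?_
      have h2 := hes k hk (e k)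
      have h3 := mul_le_mul_of_nonneg_left (hcoer (e k)) hτ.le
      have h4 := norm_sub_sq_real (ι (e k)) (ι (e (k - 1)))
      have h5 := sq_nonneg ‖ι (e k) - ι (e (k - 1))‖
      rw [real_inner_self_eq_norm_sq, real_inner_comm] at h2
      linarith
    rw [Finset.sum_sub_distrib, ← Finset.mul_sum, ← Finset.mul_sum, ← Finset.mul_sum,
      ← Finset.mul_sum, ht] at h1
    have := sq_nonneg ‖ι (e K)‖
    linarith
  have hQn : αLB * (τ * ∑ k ∈ Icc 1 K, ‖q k‖ ^ 2)
      ≤ τ * ∑ k ∈ Icc 1 K, rp k (q k) + τ * ∑ k ∈ Icc 1 K, ‖C (e k)‖ * (|γc| * ‖q k‖) := by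
    have ht := aux_tel (fun k => ‖ι (q k)‖ ^ 2) K
    simp only [hq0, map_zero, norm_zero] at ht
    have h1 : ∑ k ∈ Icc 1 K, (αLB * (τ * ‖q k‖ ^ 2)) ≤ ∑ k ∈ Icc 1 K,
        (τ * rp k (q k) + τ * (‖C (e k)‖ * (|γc| * ‖q k‖))
          + (1 / 2) * (‖ι (q (k + 1))‖ ^ 2 - ‖ι (q k)‖ ^ 2)) := by
      refine Finset.sum_le_sum fun k hk => ?_
      have h2 := hqs k hk (q k)
      have h3 := mul_le_mul_of_nonneg_left (hcoer (q k)) hτ.le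
      have h4 := norm_sub_sq_real (ι (q k)) (ι (q (k + 1)))
      have h5 := sq_nonneg ‖ι (q k) - ι (q (k + 1))‖
      have h6 : -⟪C (e k), C (q k)⟫ ≤ ‖C (e k)‖ * (|γc| * ‖q k‖) := by
        have i1 := abs_real_inner_le_norm (C (e k)) (C (q k))
        have i2 : ‖C (q k)‖ ≤ |γc| * ‖q k‖ := (hγc _).trans (by gcongr; exact le_abs_self _)
        have i3 := mul_le_mul_of_nonneg_left i2 (norm_nonneg (C (e k)))
        linarith [neg_abs_le ⟪C (e k), C (q k)⟫]
      have h7 := mul_le_mul_of_nonneg_left h6 hτ.le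
      rw [real_inner_self_eq_norm_sq] at h2
      linarith
    rw [Finset.sum_add_distrib, Finset.sum_add_distrib, ← Finset.mul_sum, ← Finset.mul_sum,
      ← Finset.mul_sum, ← Finset.mul_sum, ← Finset.mul_sum, ht] at h1
    have := sq_nonneg ‖ι (q 1)‖
    linarith
  have hres : ∀ (r : ℕ → (Y →ₗ[ℝ] ℝ)) (v : ℕ → Y), τ * ∑ k ∈ Icc 1 K, r k (v k) ≤
      Real.sqrt (τ * ∑ k ∈ Icc 1 K, (dualNorm (fun v : Y => ‖v‖) Set.univ ⇑(r k)) ^ 2)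
        * Real.sqrt (τ * ∑ k ∈ Icc 1 K, ‖v k‖ ^ 2) := fun r v =>
    le_trans (mul_le_mul_of_nonneg_left (Finset.sum_le_sum fun k _ => hY (r k) (v k)) hτ.le)
      (aux_cs τ hτ _ _ _)
  have hsq : ∀ n : ℕ → ℝ, Real.sqrt (τ * ∑ k ∈ Icc 1 K, n k ^ 2) ^ 2
      = τ * ∑ k ∈ Icc 1 K, n k ^ 2 := fun n =>
    Real.sq_sqrt (mul_nonneg hτ.le (Finset.sum_nonneg fun k _ => sq_nonneg _))
  have hαs : Real.sqrt αLB ^ 2 = αLB := Real.sq_sqrt hαLB.le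
  rw [← he0]
  refine aux_final ‖ι (e 0)‖ (Real.sqrt αLB) (Real.sqrt (τ * ∑ k ∈ Icc 1 K, ‖e k‖ ^ 2))
    (Real.sqrt (τ * ∑ k ∈ Icc 1 K, ‖q k‖ ^ 2)) (Real.sqrt (τ * ∑ k ∈ Icc 1 K, ‖C (e k)‖ ^ 2))
    Ry Rp (dualNorm (fun v : Y => ‖ι v‖) (U : Set Y) ⇑ru) |γc| c1 c2 (Real.sqrt_pos.2 hαLB)
    (norm_nonneg _) (Real.sqrt_nonneg _) (Real.sqrt_nonneg _) (Real.sqrt_nonneg _)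
    (hRy ▸ Real.sqrt_nonneg _) (hRp ▸ Real.sqrt_nonneg _) (abs_nonneg _) ?_ ?_ ?_ hc1 ?_
  · rw [hαs, hsq, hRy]
    linarith [hres ry e]
  · rw [hαs, hsq, hRp]
    have h1 := aux_cs τ hτ (Icc 1 K) (fun k => ‖C (e k)‖) (fun k => ‖q k‖)
    have h2 : ∑ k ∈ Icc 1 K, ‖C (e k)‖ * (|γc| * ‖q k‖)
        = |γc| * ∑ k ∈ Icc 1 K, ‖C (e k)‖ * ‖q k‖ := by
      rw [Finset.mul_sum]
      exact Finset.sum_congr rfl fun k _ => by ring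
    rw [h2] at hQn
    have h3 := mul_le_mul_of_nonneg_left h1 (abs_nonneg γc)
    linarith [hres rp q]
  · rw [hsq, hRy, hRp]
    have h1 := hres ry (fun k => -q k)
    simp only [norm_neg] at h1
    linarith [hres rp e, hU (e 0) (he0 ▸ U.sub_mem hu huN)]
  · rw [hαs, sq_abs, hc2]
end

section
/- Strong-constraint error-residual duality identity. Suppose e_y^0,…,e_y^K ∈ Y, e_p^1,…,e_p^{K+1} ∈ Y and e_u ∈ U, together with linear functionals r_y^1,…,r_y^K and r_p^1,…,r_p^K on Y and r_u on U, satisfy: (i) m(e_y^k − e_y^{k−1}, φ) + τ a(e_y^k, φ) = τ r_y^k(φ) for all φ ∈ Y and k = 1,…,K; (ii) m(φ, e_p^k − e_p^{k+1}) + τ a(φ, e_p^k) = τ r_p^k(φ) − τ (C e_y^k, C φ)_D for all φ ∈ Y and k = 1,…,K; (iii) (e_u, ψ)_U − m(ψ, e_p^1) = r_u(ψ) for all ψ ∈ U; with e_p^{K+1} = 0 and e_y^0 = e_u. Then ‖e_u‖_U² + τ Σ_{k=1}^K ‖C e_y^k‖_D² = −τ Σ_{k=1}^K r_y^k(e_p^k)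 + τ Σ_{k=1}^K r_p^k(e_y^k) + r_u(e_u). -/
set_option autoImplicit false

open Finset RealInnerProductSpace

/-- Strong-constraint error-residual duality identity. -/
theorem strong_constraint_error_residual_identity
    {H Y D : Type*} [NormedAddCommGroup H] [InnerProductSpace ℝ H]
    [NormedAddCommGroup Y] [InnerProductSpace ℝ Y] [FiniteDimensional ℝ Y]
    [NormedAddCommGroup D] [InnerProductSpace ℝ D]
    (ι : Y →ₗ[ℝ] H) (hι : Function.Injective ι)
    (U : Submodule ℝ Y)
    (a : Y →ₗ[ℝ] (Y →ₗ[ℝ] ℝ))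
    (τ : ℝ) (hτ : 0 < τ) (K : ℕ) (hK : 1 ≤ K)
    (C : Y →ₗ[ℝ] D)
    (ey ep : ℕ → Y) (eu : Y) (heu : eu ∈ U)
    (ry rp : ℕ → (Y →ₗ[ℝ] ℝ)) (ru : Y →ₗ[ℝ] ℝ)
    (hstate : ∀ k, 1 ≤ k → k ≤ K → ∀ φ : Y,
      ⟪ι (ey k - ey (k - 1)), ι φ⟫ + τ * a (ey k) φ = τ * ry k φ)
    (hadj : ∀ k, 1 ≤ k → k ≤ K → ∀ φ : Y,
      ⟪ι φ, ι (ep k - ep (k + 1))⟫ + τ * a φ (ep k)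
        = τ * rp k φ - τ * ⟪C (ey k), C φ⟫)
    (hopt : ∀ ψ ∈ U, ⟪ι eu, ι ψ⟫ - ⟪ι ψ, ι (ep 1)⟫ = ru ψ)
    (hfin : ep (K + 1) = 0) (hinit : ey 0 = eu) :
    ‖ι eu‖ ^ 2 + τ * ∑ k ∈ Icc 1 K, ‖C (ey k)‖ ^ 2
      = -(τ * ∑ k ∈ Icc 1 K, ry k (ep k))
        + τ * ∑ k ∈ Icc 1 K, rp k (ey k) + ru eu := by
  have key : ∀ n, n ≤ K → τ * ∑ k ∈ Icc 1 n, ‖C (ey k)‖ ^ 2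
      = -(τ * ∑ k ∈ Icc 1 n, ry k (ep k)) + τ * ∑ k ∈ Icc 1 n, rp k (ey k)
        + ⟪ι (ey n), ι (ep (n + 1))⟫ - ⟪ι (ey 0), ι (ep 1)⟫ := by
    intro n
    induction n with
    | zero => intro _; simp
    | succ n ih =>
      intro hn
      have h0 := ih (by omega)
      have h1 := hstate (n + 1) (by omega) hn (ep (n + 1))
      have h2 := hadj (n + 1) (by omega) hn (ey (n + 1))
      rw [real_inner_self_eq_norm_sq] at h2
      simp only [Nat.add_sub_cancel, map_sub, inner_sub_left, inner_sub_right] at h1 h2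
      simp only [Finset.sum_Icc_succ_top (Nat.le_add_left 1 n), mul_add]
      linarith
  have h := key K le_rfl
  have h3 := hopt eu heu
  rw [real_inner_self_eq_norm_sq] at h3
  rw [hfin, hinit, map_zero, inner_zero_right] at h
  linarith
end

section
/- Weak-constraint error-residual duality identity. Suppose e_y^0,…,e_y^K ∈ Y, e_p^1,…,e_p^{K+1} ∈ Y and e_u^1,…,e_u^K ∈ U, together with linear functionals r̃_y^1,…,r̃_y^K and r̃_p^1,…,r̃_p^K on Y and r̃_u^1,…,r̃_u^K on U, satisfy: (i) m(e_y^k − e_y^{k−1}, φ) + τ a(e_y^k, φ) = τ r̃_y^k(φ) + τ b(e_u^k, φ) for all φ ∈ Y and k = 1,…,K; (ii) m(φ, e_p^k − e_p^{k+1}) + τ a(φ, e_p^k) = τ r̃_p^k(φ) − τ (C e_y^k, C φ)_D for all φ ∈ Y and k = 1,…,K; (iii) (e_u^k, ψ)_U − b(ψ, e_p^k) = r̃_u^k(ψ) for all ψ ∈ U and k = 1,…,K; with e_p^{K+1} = 0 and e_y^0 = 0. Then τ Σ_{k=1}^K ‖e_u^k‖_U² + τ Σ_{k=1}^K ‖C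 e_y^k‖_D² = −τ Σ_{k=1}^K r̃_y^k(e_p^k) + τ Σ_{k=1}^K r̃_p^k(e_y^k) + τ Σ_{k=1}^K r̃_u^k(e_u^k). -/
set_option autoImplicit false

open Finset RealInnerProductSpace

/-- Weak-constraint error-residual duality identity. -/
theorem weak_constraint_error_residual_identity
    {H Y D : Type*} [NormedAddCommGroup H] [InnerProductSpace ℝ H]
    [NormedAddCommGroup Y] [InnerProductSpace ℝ Y] [FiniteDimensional ℝ Y]
    [NormedAddCommGroup D] [InnerProductSpace ℝ D]
    (ι : Y →ₗ[ℝ] H) (hι : Function.Injective ι)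
    (U : Submodule ℝ Y)
    (a : Y →ₗ[ℝ] (Y →ₗ[ℝ] ℝ))
    (τ : ℝ) (hτ : 0 < τ) (K : ℕ) (hK : 1 ≤ K)
    (b : Y →ₗ[ℝ] (Y →ₗ[ℝ] ℝ))
    (C : Y →ₗ[ℝ] D)
    (ey ep eu : ℕ → Y) (heu : ∀ k, 1 ≤ k → k ≤ K → eu k ∈ U)
    (ry rp ru : ℕ → (Y →ₗ[ℝ] ℝ))
    (hstate : ∀ k, 1 ≤ k → k ≤ K → ∀ φ : Y,
      ⟪ι (ey k - ey (k - 1)), ι φ⟫ + τ * a (ey k) φ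
        = τ * ry k φ + τ * b (eu k) φ)
    (hadj : ∀ k, 1 ≤ k → k ≤ K → ∀ φ : Y,
      ⟪ι φ, ι (ep k - ep (k + 1))⟫ + τ * a φ (ep k)
        = τ * rp k φ - τ * ⟪C (ey k), C φ⟫)
    (hopt : ∀ k, 1 ≤ k → k ≤ K → ∀ ψ ∈ U,
      ⟪ι (eu k), ι ψ⟫ - b ψ (ep k) = ru k ψ)
    (hfin : ep (K + 1) = 0) (hinit : ey 0 = 0) :
    τ * ∑ k ∈ Icc 1 K, ‖ι (eu k)‖ ^ 2 + τ * ∑ k ∈ Icc 1 K, ‖C (ey k)‖ ^ 2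
      = -(τ * ∑ k ∈ Icc 1 K, ry k (ep k))
        + τ * ∑ k ∈ Icc 1 K, rp k (ey k)
        + τ * ∑ k ∈ Icc 1 K, ru k (eu k) := by
  have key : ∀ n, n ≤ K →
      τ * ∑ k ∈ Icc 1 n, ‖ι (eu k)‖ ^ 2 + τ * ∑ k ∈ Icc 1 n, ‖C (ey k)‖ ^ 2
      = -(τ * ∑ k ∈ Icc 1 n, ry k (ep k))
        + τ * ∑ k ∈ Icc 1 n, rp k (ey k)
        + τ * ∑ k ∈ Icc 1 n, ru k (eu k) + ⟪ι (ey n), ι (ep (n + 1))⟫ := by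
    intro n
    induction n with
    | zero => intro _; simp [hinit]
    | succ n ih =>
      intro hn
      have ih' := ih (by omega)
      have h1 := hstate (n + 1) (by omega) hn (ep (n + 1))
      have h2 := hadj (n + 1) (by omega) hn (ey (n + 1))
      have h3 := hopt (n + 1) (by omega) hn (eu (n + 1)) (heu (n + 1) (by omega) hn)
      rw [Nat.add_sub_cancel, map_sub, inner_sub_left] at h1
      rw [map_sub, inner_sub_right, real_inner_self_eq_norm_sq] at h2
      rw [real_inner_self_eq_norm_sq] at h3
      simp only [Finset.sum_Icc_succ_top (show 1 ≤ n + 1 by omega)]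
      linear_combination ih' - h1 + h2 + τ * h3
  have h := key K le_rfl
  rw [hfin, map_zero, inner_zero_right, add_zero] at h
  exact h
end

section
/- Combined error-residual duality identity (used in the proof of Proposition 3). Suppose e_y^0,…,e_y^K ∈ Y, e_p^1,…,e_p^{K+1} ∈ Y, e_u^0 ∈ U and e_u^1,…,e_u^K ∈ U, together with linear functionals r̃_y^1,…,r̃_y^K and r̃_p^1,…,r̃_p^K on Y, r̃_u^1,…,r̃_u^K on U and r_u^0 on U, satisfy: (i) m(e_y^k − e_y^{k−1}, φ) + τ a(e_y^k, φ) = τ r̃_y^k(φ) + τ b(e_u^k, φ) for all φ ∈ Y and k = 1,…,K; (ii) m(φ, e_p^k − e_p^{k+1}) + τ a(φ, e_p^k) = τ r̃_p^k(φ) − τ (C e_y^k, C φ)_D for all φ ∈ Y and k = 1,…,K; (iii) (e_u^k, ψ)_U − b(ψ, e_p^k) = r̃_u^k(ψ) for all ψ ∈ U and k = 1,…,K; (iv) (e_u^0, ψ)_U − m(ψ, e_p^1) = r_u^0(ψ) for all ψ ∈ U; with e_p^{K+1} = 0 and e_y^0 = e_u^0. Then ‖e_u^0‖_U² + τ Σ_{k=1}^K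 ‖e_u^k‖_U² + τ Σ_{k=1}^K ‖C e_y^k‖_D² = −τ Σ_{k=1}^K r̃_y^k(e_p^k) + τ Σ_{k=1}^K r̃_p^k(e_y^k) + τ Σ_{k=1}^K r̃_u^k(e_u^k) + r_u^0(e_u^0). -/
set_option autoImplicit false

open Finset RealInnerProductSpace

/-- Combined error-residual duality identity (used in the proof of Proposition 3). -/
theorem combined_error_residual_identity
    {H Y D : Type*} [NormedAddCommGroup H] [InnerProductSpace ℝ H]
    [NormedAddCommGroup Y] [InnerProductSpace ℝ Y] [FiniteDimensional ℝ Y]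
    [NormedAddCommGroup D] [InnerProductSpace ℝ D]
    (ι : Y →ₗ[ℝ] H) (hι : Function.Injective ι)
    (U : Submodule ℝ Y)
    (a : Y →ₗ[ℝ] (Y →ₗ[ℝ] ℝ))
    (τ : ℝ) (hτ : 0 < τ) (K : ℕ) (hK : 1 ≤ K)
    (b : Y →ₗ[ℝ] (Y →ₗ[ℝ] ℝ))
    (C : Y →ₗ[ℝ] D)
    (ey ep eu : ℕ → Y) (heu : ∀ k ≤ K, eu k ∈ U)
    (ry rp ru : ℕ → (Y →ₗ[ℝ] ℝ)) (ru0 : Y →ₗ[ℝ] ℝ)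
    (hstate : ∀ k, 1 ≤ k → k ≤ K → ∀ φ : Y,
      ⟪ι (ey k - ey (k - 1)), ι φ⟫ + τ * a (ey k) φ
        = τ * ry k φ + τ * b (eu k) φ)
    (hadj : ∀ k, 1 ≤ k → k ≤ K → ∀ φ : Y,
      ⟪ι φ, ι (ep k - ep (k + 1))⟫ + τ * a φ (ep k)
        = τ * rp k φ - τ * ⟪C (ey k), C φ⟫)
    (hopt : ∀ k, 1 ≤ k → k ≤ K → ∀ ψ ∈ U,
      ⟪ι (eu k), ι ψ⟫ - b ψ (ep k) = ru k ψ)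
    (hopt0 : ∀ ψ ∈ U, ⟪ι (eu 0), ι ψ⟫ - ⟪ι ψ, ι (ep 1)⟫ = ru0 ψ)
    (hfin : ep (K + 1) = 0) (hinit : ey 0 = eu 0) :
    ‖ι (eu 0)‖ ^ 2 + τ * ∑ k ∈ Icc 1 K, ‖ι (eu k)‖ ^ 2
        + τ * ∑ k ∈ Icc 1 K, ‖C (ey k)‖ ^ 2
      = -(τ * ∑ k ∈ Icc 1 K, ry k (ep k))
        + τ * ∑ k ∈ Icc 1 K, rp k (ey k)
        + τ * ∑ k ∈ Icc 1 K, ru k (eu k) + ru0 (eu 0) := by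
  have key : ∀ n, n ≤ K →
      τ * ∑ k ∈ Icc 1 n, ‖ι (eu k)‖ ^ 2 + τ * ∑ k ∈ Icc 1 n, ‖C (ey k)‖ ^ 2
      = -(τ * ∑ k ∈ Icc 1 n, ry k (ep k)) + τ * ∑ k ∈ Icc 1 n, rp k (ey k)
        + τ * ∑ k ∈ Icc 1 n, ru k (eu k)
        + ⟪ι (ey n), ι (ep (n + 1))⟫ - ⟪ι (ey 0), ι (ep 1)⟫ := by
    intro n
    induction n with
    | zero => intro _; simp
    | succ n ih =>
      intro hn
      have ih' := ih (by omega)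
      have h1 := hstate (n + 1) (by omega) hn (ep (n + 1))
      have h2 := hadj (n + 1) (by omega) hn (ey (n + 1))
      have h3 := hopt (n + 1) (by omega) hn (eu (n + 1)) (heu _ hn)
      simp only [Nat.add_sub_cancel, map_sub, inner_sub_left, inner_sub_right,
        real_inner_self_eq_norm_sq] at h1 h2 h3
      simp only [Finset.sum_Icc_succ_top (Nat.le_add_left 1 n)]
      linear_combination ih' + h2 - h1 + τ * h3
  have hK' := key K le_rfl
  have h0 := hopt0 (eu 0) (heu 0 (Nat.zero_le _))
  rw [real_inner_self_eq_norm_sq] at h0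
  rw [hfin, hinit, map_zero, inner_zero_right] at hK'
  linear_combination hK' + h0
end

section
/- Spatio-temporal energy estimate for the state error (inequality (eq10)). Suppose e_y^0,…,e_y^K ∈ Y and e_u ∈ U, together with linear functionals r_y^1,…,r_y^K on Y, satisfy m(e_y^k − e_y^{k−1}, φ) + τ a(e_y^k, φ) = τ r_y^k(φ) for all φ ∈ Y and k = 1,…,K, with e_y^0 = e_u. Then τ Σ_{k=1}^K ‖e_y^k‖_Y² ≤ (τ/α_LB²) Σ_{k=1}^K ‖r_y^k‖_{Y'}² + (1/α_LB) ‖e_u‖_U². -/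
set_option autoImplicit false

open Finset RealInnerProductSpace

theorem le_dualNorm_aux {Y : Type*} [NormedAddCommGroup Y] [InnerProductSpace ℝ Y]
    [FiniteDimensional ℝ Y] (r : Y →ₗ[ℝ] ℝ) (v : Y) :
    r v ≤ dualNorm (fun v : Y => ‖v‖) Set.univ ⇑r * ‖v‖ := by
  by_cases hv : v = 0
  · simp [hv]
  have hpos : 0 < ‖v‖ := norm_pos_iff.mpr hv
  rw [← div_le_iff₀ hpos]
  unfold dualNorm
  refine le_csSup ⟨‖LinearMap.toContinuousLinearMap r‖, ?_⟩ ⟨v, Set.mem_univ _, hv, rfl⟩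
  rintro x ⟨w, -, hw, rfl⟩
  rw [div_le_iff₀ (norm_pos_iff.mpr hw)]
  exact (le_abs_self _).trans ((LinearMap.toContinuousLinearMap r).le_opNorm w)

/-- Spatio-temporal energy estimate for the state error. -/
theorem state_error_energy_estimate
    {H Y : Type*} [NormedAddCommGroup H] [InnerProductSpace ℝ H]
    [NormedAddCommGroup Y] [InnerProductSpace ℝ Y] [FiniteDimensional ℝ Y]
    (ι : Y →ₗ[ℝ] H) (hι : Function.Injective ι)
    (U : Submodule ℝ Y)
    (a : Y →ₗ[ℝ] (Y →ₗ[ℝ] ℝ))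
    (τ : ℝ) (hτ : 0 < τ) (K : ℕ) (hK : 1 ≤ K)
    (αLB : ℝ) (hαLB : 0 < αLB) (hcoer : ∀ v : Y, αLB * ‖v‖ ^ 2 ≤ a v v)
    (ey : ℕ → Y) (eu : Y) (heu : eu ∈ U)
    (ry : ℕ → (Y →ₗ[ℝ] ℝ))
    (hstate : ∀ k, 1 ≤ k → k ≤ K → ∀ φ : Y,
      ⟪ι (ey k - ey (k - 1)), ι φ⟫ + τ * a (ey k) φ = τ * ry k φ)
    (hinit : ey 0 = eu) :
    τ * ∑ k ∈ Icc 1 K, ‖ey k‖ ^ 2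
      ≤ τ / αLB ^ 2 * ∑ k ∈ Icc 1 K, (dualNorm (fun v : Y => ‖v‖) Set.univ ⇑(ry k)) ^ 2
        + (1 / αLB) * ‖ι eu‖ ^ 2 := by
  have key : ∀ n, n ≤ K → τ * ∑ k ∈ Icc 1 n, ‖ey k‖ ^ 2 + (1 / αLB) * ‖ι (ey n)‖ ^ 2
      ≤ τ / αLB ^ 2 * ∑ k ∈ Icc 1 n, (dualNorm (fun v : Y => ‖v‖) Set.univ ⇑(ry k)) ^ 2
        + (1 / αLB) * ‖ι eu‖ ^ 2 := by
    intro n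
    induction n with
    | zero => intro _; simp [hinit]
    | succ n ih =>
      intro hn
      have ih' := ih (by omega)
      rw [Finset.sum_Icc_succ_top (by omega), Finset.sum_Icc_succ_top (by omega)]
      have h1 := hstate (n + 1) (by omega) hn (ey (n + 1))
      have h2 := hcoer (ey (n + 1))
      have h3 := le_dualNorm_aux (ry (n + 1)) (ey (n + 1))
      set D := dualNorm (fun v : Y => ‖v‖) Set.univ ⇑(ry (n + 1))
      rw [Nat.add_sub_cancel, map_sub, inner_sub_left, real_inner_self_eq_norm_sq] at h1
      have h4 : 2 * ⟪ι (ey n), ι (ey (n + 1))⟫ ≤ ‖ι (ey n)‖ ^ 2 + ‖ι (ey (n + 1))‖ ^ 2 := by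
        have := norm_sub_sq_real (ι (ey n)) (ι (ey (n + 1)))
        nlinarith [sq_nonneg ‖ι (ey n) - ι (ey (n + 1))‖]
      have h5 : 2 * (D * ‖ey (n + 1)‖) ≤ D ^ 2 / αLB + αLB * ‖ey (n + 1)‖ ^ 2 := by
        have : D ^ 2 / αLB + αLB * ‖ey (n + 1)‖ ^ 2 - 2 * (D * ‖ey (n + 1)‖)
            = (D - αLB * ‖ey (n + 1)‖) ^ 2 / αLB := by field_simp; ring
        have : 0 ≤ (D - αLB * ‖ey (n + 1)‖) ^ 2 / αLB := by positivity
        linarith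
      have h6 : τ * (αLB * ‖ey (n + 1)‖ ^ 2) ≤ τ * (2 * a (ey (n + 1)) (ey (n + 1))
          - 2 * ry (n + 1) (ey (n + 1)) + D ^ 2 / αLB) :=
        mul_le_mul_of_nonneg_left (by linarith) hτ.le
      have h7 : τ * (αLB * ‖ey (n + 1)‖ ^ 2) + ‖ι (ey (n + 1))‖ ^ 2
          ≤ τ * (D ^ 2 / αLB) + ‖ι (ey n)‖ ^ 2 := by linarith
      have h8 := mul_le_mul_of_nonneg_left h7 (one_div_pos.mpr hαLB).le
      have e1 : 1 / αLB * (τ * (αLB * ‖ey (n + 1)‖ ^ 2) + ‖ι (ey (n + 1))‖ ^ 2)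
          = τ * ‖ey (n + 1)‖ ^ 2 + 1 / αLB * ‖ι (ey (n + 1))‖ ^ 2 := by field_simp
      have e2 : 1 / αLB * (τ * (D ^ 2 / αLB) + ‖ι (ey n)‖ ^ 2)
          = τ / αLB ^ 2 * D ^ 2 + 1 / αLB * ‖ι (ey n)‖ ^ 2 := by field_simp
      rw [e1, e2] at h8
      rw [mul_add, mul_add]
      linarith
  have := key K le_rfl
  have : 0 ≤ (1 / αLB) * ‖ι (ey K)‖ ^ 2 := by positivity
  linarith
end

section
/- Spatio-temporal energy estimate for the state error with model-error forcing (inequality (eq11_w)). Suppose e_y^0,…,e_y^K ∈ Y with e_y^0 = 0 and e_u^1,…,e_u^K ∈ U, together with linear functionals r̃_y^1,…,r̃_y^K on Y, satisfy m(e_y^k − e_y^{k−1}, φ) + τ a(e_y^k, φ) = τ r̃_y^k(φ) + τ b(e_u^k, φ) for all φ ∈ Y and k = 1,…,K. Then τ Σ_{k=1}^K ‖e_y^k‖_Y² ≤ (2τ/α_LB²) Σ_{k=1}^K ‖r̃_y^k‖_{Y'}² + 2 (γ_b/α_LB)² · τ Σ_{k=1}^K ‖e_u^k‖_U². -/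
set_option autoImplicit false

open Finset RealInnerProductSpace

/-- Spatio-temporal energy estimate for the state error with model-error forcing. -/
theorem state_error_energy_estimate_with_model_error
    {H Y : Type*} [NormedAddCommGroup H] [InnerProductSpace ℝ H]
    [NormedAddCommGroup Y] [InnerProductSpace ℝ Y] [FiniteDimensional ℝ Y]
    (ι : Y →ₗ[ℝ] H) (hι : Function.Injective ι)
    (U : Submodule ℝ Y)
    (a : Y →ₗ[ℝ] (Y →ₗ[ℝ] ℝ))
    (τ : ℝ) (hτ : 0 < τ) (K : ℕ) (hK : 1 ≤ K)
    (αLB : ℝ) (hαLB : 0 < αLB) (hcoer : ∀ v : Y, αLB * ‖v‖ ^ 2 ≤ a v v)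
    (b : Y →ₗ[ℝ] (Y →ₗ[ℝ] ℝ)) (γb : ℝ)
    (hγb : ∀ w ∈ U, ∀ v : Y, |b w v| ≤ γb * ‖ι w‖ * ‖v‖)
    (ey eu : ℕ → Y) (heu : ∀ k, 1 ≤ k → k ≤ K → eu k ∈ U)
    (ry : ℕ → (Y →ₗ[ℝ] ℝ))
    (hinit : ey 0 = 0)
    (hstate : ∀ k, 1 ≤ k → k ≤ K → ∀ φ : Y,
      ⟪ι (ey k - ey (k - 1)), ι φ⟫ + τ * a (ey k) φ
        = τ * ry k φ + τ * b (eu k) φ) :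
    τ * ∑ k ∈ Icc 1 K, ‖ey k‖ ^ 2
      ≤ 2 * τ / αLB ^ 2 * ∑ k ∈ Icc 1 K, (dualNorm (fun v : Y => ‖v‖) Set.univ ⇑(ry k)) ^ 2
        + 2 * (γb / αLB) ^ 2 * (τ * ∑ k ∈ Icc 1 K, ‖ι (eu k)‖ ^ 2) := by
  have hR : ∀ k, ∀ v : Y, ry k v ≤ dualNorm (fun v : Y => ‖v‖) Set.univ ⇑(ry k) * ‖v‖ := by
    intro k v
    by_cases hv : v = 0
    · simp [hv]
    have hpos : 0 < ‖v‖ := norm_pos_iff.mpr hv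
    rw [← div_le_iff₀ hpos]
    apply le_csSup
    · refine ⟨‖LinearMap.toContinuousLinearMap (ry k)‖, ?_⟩
      rintro x ⟨w, -, hw, rfl⟩
      have hw' : 0 < ‖w‖ := norm_pos_iff.mpr hw
      rw [div_le_iff₀ hw']
      exact (le_abs_self _).trans ((LinearMap.toContinuousLinearMap (ry k)).le_opNorm w)
    · exact ⟨v, Set.mem_univ _, hv, rfl⟩
  generalize hD : (fun k => dualNorm (fun v : Y => ‖v‖) Set.univ ⇑(ry k)) = D at *
  have hD' : ∀ k, dualNorm (fun v : Y => ‖v‖) Set.univ ⇑(ry k) = D k := fun k => congrFun hD k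
  simp only [hD'] at hR ⊢
  have step : ∀ k, 1 ≤ k → k ≤ K →
      αLB * ‖ι (ey k)‖ ^ 2 + τ * αLB ^ 2 * ‖ey k‖ ^ 2
        ≤ αLB * ‖ι (ey (k - 1))‖ ^ 2 + 2 * τ * (D k ^ 2 + γb ^ 2 * ‖ι (eu k)‖ ^ 2) := by
    intro k h1 h2
    have h := hstate k h1 h2 (ey k)
    have hb := (le_abs_self _).trans (hγb (eu k) (heu k h1 h2) (ey k))
    have hr := hR k (ey k)
    have hc := hcoer (ey k)
    have hin : ‖ι (ey k)‖ ^ 2 - ‖ι (ey (k - 1))‖ ^ 2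
        ≤ 2 * ⟪ι (ey k - ey (k - 1)), ι (ey k)⟫ := by
      have h3 := norm_sub_sq_real (ι (ey k)) (ι (ey (k - 1)))
      have h4 := sq_nonneg ‖ι (ey k) - ι (ey (k - 1))‖
      rw [map_sub, inner_sub_left, real_inner_self_eq_norm_sq,
        real_inner_comm]
      linarith
    set x := ‖ey k‖
    set E := ‖ι (eu k)‖
    have h5 : ‖ι (ey k)‖ ^ 2 - ‖ι (ey (k - 1))‖ ^ 2
        ≤ 2 * (τ * (D k * x + γb * E * x - αLB * x ^ 2)) := by
      have : τ * (ry k (ey k) + b (eu k) (ey k) - a (ey k) (ey k))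
        ≤ τ * (D k * x + γb * E * x - αLB * x ^ 2) :=
        mul_le_mul_of_nonneg_left (by linarith) hτ.le
      linarith
    have h6 := mul_le_mul_of_nonneg_left h5 hαLB.le
    have h7 : 0 ≤ τ * ((αLB * x - (D k + γb * E)) ^ 2 + (D k - γb * E) ^ 2) := by positivity
    linarith
  have ind : ∀ n, n ≤ K → αLB * ‖ι (ey n)‖ ^ 2 + τ * αLB ^ 2 * ∑ k ∈ Icc 1 n, ‖ey k‖ ^ 2
      ≤ 2 * τ * (∑ k ∈ Icc 1 n, D k ^ 2 + γb ^ 2 * ∑ k ∈ Icc 1 n, ‖ι (eu k)‖ ^ 2) := by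
    intro n
    induction n with
    | zero => intro _; simp [hinit]
    | succ n ih =>
      intro hn
      have h := step (n + 1) (by omega) hn
      have h' := ih (by omega)
      rw [Nat.add_sub_cancel] at h
      simp only [Finset.sum_Icc_succ_top (show 1 ≤ n + 1 by omega)]
      linarith
  have hK' := ind K le_rfl
  have h0 : 0 ≤ αLB * ‖ι (ey K)‖ ^ 2 := by positivity
  have e : 2 * τ / αLB ^ 2 * ∑ k ∈ Icc 1 K, D k ^ 2
      + 2 * (γb / αLB) ^ 2 * (τ * ∑ k ∈ Icc 1 K, ‖ι (eu k)‖ ^ 2)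
      = (2 * τ * (∑ k ∈ Icc 1 K, D k ^ 2 + γb ^ 2 * ∑ k ∈ Icc 1 K, ‖ι (eu k)‖ ^ 2)) / αLB ^ 2 := by
    field_simp
  rw [e, le_div_iff₀ (by positivity)]
  linarith
end
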